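/- For every φ ∈ X, ∫_{ℝ³} |∂₁φ∧∂₂φ∧∂₃φ| dx ≥ 2π² |d(φ)|. -/

import Mathlib

/- Common setting: Skyrme maps φ : ℝ³ → S³ ⊂ ℝ⁴ with weak partial derivatives. -/

open MeasureTheory Real Filter
open scoped Topology ENNReal BigOperators

noncomputable section

abbrev R3 : Type := Fin 3 → ℝ
abbrev R4 : Type := Fin 4 → ℝ

/-- Euclidean dot product on ℝ⁴. -/
def dot (u v : R4) : ℝ := ∑ a, u a * v a

/-- Squared Euclidean norm on ℝ⁴. -/
def nsq (u : R4) : ℝ := dot u u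

/-- |u∧v|² = |u|²|v|² − ⟨u,v⟩². -/
def wedgeSq (u v : R4) : ℝ := nsq u * nsq v - (dot u v) ^ 2

/-- Gram determinant of three vectors of ℝ⁴. -/
def gram (u v w : R4) : ℝ :=
  Matrix.det !![dot u u, dot u v, dot u w; dot v u, dot v v, dot v w; dot w u, dot w v, dot w w]

/-- Determinant of the 4×4 matrix with columns a, b, c, d. -/
def det4 (a b c d : R4) : ℝ := Matrix.det (Matrix.of fun i j => ![a, b, c, d] j i)

/-- Smooth compactly supported test functions on ℝ³. -/
def IsTestFun {E : Type*} [NormedAddCommGroup E] [NormedSpace ℝ E] (ψ : R3 → E) : Prop :=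
  ContDiff ℝ (⊤ : ℕ∞) ψ ∧ HasCompactSupport ψ

/-- A weakly differentiable map φ : ℝ³ → S³ ⊂ ℝ⁴ together with its weak
partial derivatives `pderiv i = ∂ᵢφ`. -/
structure SkyrmeMap where
  toFun : R3 → R4
  pderiv : Fin 3 → R3 → R4
  meas : Measurable toFun
  pderiv_locInt : ∀ i, LocallyIntegrable (pderiv i) volume
  sphere : ∀ᵐ x : R3, nsq (toFun x) = 1
  weak : ∀ (i : Fin 3) (a : Fin 4) (ψ : R3 → ℝ), IsTestFun ψ →
    ∫ x : R3, fderiv ℝ ψ x (Pi.single i 1) * toFun x a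
      = - ∫ x : R3, ψ x * pderiv i x a

/-- |∇φ|² = Σᵢ |∂ᵢφ|². -/
def gradSq (φ : SkyrmeMap) (x : R3) : ℝ := ∑ i, nsq (φ.pderiv i x)

/-- |A(φ)|² = Σᵢⱼ |∂ᵢφ∧∂ⱼφ|². -/
def ASq (φ : SkyrmeMap) (x : R3) : ℝ := ∑ i, ∑ j, wedgeSq (φ.pderiv i x) (φ.pderiv j x)

/-- The Skyrme energy density |∇φ|² + |A(φ)|². -/
def energyDensity (φ : SkyrmeMap) (x : R3) : ℝ := gradSq φ x + ASq φ x

/-- φ ∈ X : finite Skyrme energy. -/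
def memX (φ : SkyrmeMap) : Prop := Integrable (energyDensity φ) volume

/-- The Skyrme energy ℰ(φ). -/
def energy (φ : SkyrmeMap) : ℝ := ∫ x, energyDensity φ x

/-- det(φ, ∇φ)(x). -/
def detDen (φ : SkyrmeMap) (x : R3) : ℝ :=
  det4 (φ.toFun x) (φ.pderiv 0 x) (φ.pderiv 1 x) (φ.pderiv 2 x)

/-- The topological degree d(φ) = (1/(2π²)) ∫ det(φ,∇φ). -/
def degree (φ : SkyrmeMap) : ℝ := (1 / (2 * π ^ 2)) * ∫ x, detDen φ x

/-- I_k = inf of the energy over maps of degree k. -/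
def Skyrme.I (k : ℤ) : ℝ :=
  sInf {E : ℝ | ∃ φ : SkyrmeMap, memX φ ∧ degree φ = (k : ℝ) ∧ energy φ = E}

/-- The north pole P = (0,0,0,1) of S³. -/
def northPole : R4 := ![0, 0, 0, 1]

/-- The Euclidean ball B(y,r) in ℝ³. -/
def eball (y : R3) (r : ℝ) : Set R3 := {x | ∑ i, (x i - y i) ^ 2 < r ^ 2}

def crossFour (u v w : R4) : R4 :=
  ![-(u 1 * (v 2 * w 3 - v 3 * w 2) - u 2 * (v 1 * w 3 - v 3 * w 1) + u 3 * (v 1 * w 2 - v 2 * w 1)) * (-1),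
    -(u 0 * (v 2 * w 3 - v 3 * w 2) - u 2 * (v 0 * w 3 - v 3 * w 0) + u 3 * (v 0 * w 2 - v 2 * w 0)),
    (u 0 * (v 1 * w 3 - v 3 * w 1) - u 1 * (v 0 * w 3 - v 3 * w 0) + u 3 * (v 0 * w 1 - v 1 * w 0)),
    -(u 0 * (v 1 * w 2 - v 2 * w 1) - u 1 * (v 0 * w 2 - v 2 * w 0) + u 2 * (v 0 * w 1 - v 1 * w 0))]

lemma det4_eq_dot (a u v w : R4) : det4 a u v w = dot a (crossFour u v w) := by
  simp [det4, dot, crossFour, Matrix.det_succ_row_zero, Fin.sum_univ_succ, Fin.succAbove]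
  ring

lemma nsq_nonneg (u : R4) : 0 ≤ nsq u := by
  unfold nsq dot
  exact Finset.sum_nonneg fun a _ => mul_self_nonneg (u a)

lemma dot_comm' (u v : R4) : dot u v = dot v u := by simp [dot, mul_comm]

lemma dot_sq_le (u v : R4) : dot u v ^ 2 ≤ nsq u * nsq v := by
  have := Finset.sum_mul_sq_le_sq_mul_sq Finset.univ u v
  simpa [dot, nsq, pow_two] using this

lemma wedgeSq_nonneg (u v : R4) : 0 ≤ wedgeSq u v := by
  have := dot_sq_le u v
  unfold wedgeSq; linarith

lemma gram_eq (u v w : R4) : gram u v w = nsq (crossFour u v w) := by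
  simp [gram, Matrix.det_fin_three, nsq, dot, crossFour, Fin.sum_univ_four]
  ring

lemma gram_le (u v w : R4) : gram u v w ≤ wedgeSq u v * nsq w := by
  have h := nsq_nonneg (fun a => dot v w * u a - dot u w * v a)
  have e : nsq (fun a => dot v w * u a - dot u w * v a)
      = dot v w ^ 2 * dot u u - 2 * dot v w * dot u w * dot u v + dot u w ^ 2 * dot v v := by
    generalize dot v w = p
    generalize dot u w = q
    simp [nsq, dot, Fin.sum_univ_four]
    ring
  rw [e] at h
  simp only [gram, Matrix.det_fin_three, wedgeSq, nsq]
  simp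
  rw [dot_comm' v u, dot_comm' w u, dot_comm' w v]
  linarith

lemma abs_det4_le (a u v w : R4) (ha : nsq a = 1) : |det4 a u v w| ≤ √(gram u v w) := by
  apply Real.abs_le_sqrt
  rw [det4_eq_dot, gram_eq]
  simpa [ha] using dot_sq_le a (crossFour u v w)

lemma sqrt_gram_le (φ : SkyrmeMap) (x : R3) :
    √(gram (φ.pderiv 0 x) (φ.pderiv 1 x) (φ.pderiv 2 x)) ≤ energyDensity φ x := by
  have h1 : wedgeSq (φ.pderiv 0 x) (φ.pderiv 1 x) ≤ ASq φ x := by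
    have := fun i j => wedgeSq_nonneg (φ.pderiv i x) (φ.pderiv j x)
    refine le_trans ?_ (Finset.single_le_sum (f := fun i => ∑ j, wedgeSq (φ.pderiv i x) (φ.pderiv j x))
      (fun i _ => Finset.sum_nonneg fun j _ => this i j) (Finset.mem_univ 0))
    exact Finset.single_le_sum (f := fun j => wedgeSq (φ.pderiv 0 x) (φ.pderiv j x))
      (fun j _ => this 0 j) (Finset.mem_univ 1)
  have h2 : nsq (φ.pderiv 2 x) ≤ gradSq φ x :=
    Finset.single_le_sum (f := fun i => nsq (φ.pderiv i x))
      (fun j _ => nsq_nonneg _) (Finset.mem_univ 2)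
  have h3 := wedgeSq_nonneg (φ.pderiv 0 x) (φ.pderiv 1 x)
  have h4 := nsq_nonneg (φ.pderiv 2 x)
  have h5 := gram_le (φ.pderiv 0 x) (φ.pderiv 1 x) (φ.pderiv 2 x)
  unfold energyDensity
  apply Real.sqrt_le_iff.2 ⟨by linarith, ?_⟩
  have h6 := mul_le_mul h1 h2 h4 (h3.trans h1)
  nlinarith [mul_nonneg (h3.trans h1) (h4.trans h2), sq_nonneg (gradSq φ x), sq_nonneg (ASq φ x)]

lemma integrable_sqrt_gram (φ : SkyrmeMap) (hφ : memX φ) :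
    Integrable (fun x => √(gram (φ.pderiv 0 x) (φ.pderiv 1 x) (φ.pderiv 2 x))) volume := by
  refine Integrable.mono' hφ ?_ (ae_of_all _ fun x => ?_)
  · have hm : ∀ i a, AEMeasurable (fun x => φ.pderiv i x a) volume := fun i a =>
      (measurable_pi_apply a).comp_aemeasurable (φ.pderiv_locInt i).aestronglyMeasurable.aemeasurable
    have hd : ∀ i j, AEMeasurable (fun x => dot (φ.pderiv i x) (φ.pderiv j x)) volume := by
      intro i j
      unfold dot
      exact Finset.aemeasurable_fun_sum _ fun a _ => (hm i a).mul (hm j a)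
    apply AEMeasurable.aestronglyMeasurable
    apply AEMeasurable.sqrt
    simp only [gram, Matrix.det_fin_three]
    simp
    have := hd 0 0
    have := hd 0 1
    have := hd 0 2
    have := hd 1 0
    have := hd 1 1
    have := hd 1 2
    have := hd 2 0
    have := hd 2 1
    have := hd 2 2
    fun_prop
  · rw [Real.norm_of_nonneg (Real.sqrt_nonneg _)]
    exact sqrt_gram_le φ x

/-- ∫ |∂₁φ∧∂₂φ∧∂₃φ| ≥ 2π² |d(φ)|. -/
theorem skyrme_jacobian_degree_bound (φ : SkyrmeMap) (hφ : memX φ) :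
    2 * π ^ 2 * |degree φ|
      ≤ ∫ x, Real.sqrt (gram (φ.pderiv 0 x) (φ.pderiv 1 x) (φ.pderiv 2 x)) := by
  have h : ‖∫ x, detDen φ x‖ ≤ ∫ x, √(gram (φ.pderiv 0 x) (φ.pderiv 1 x) (φ.pderiv 2 x)) := by
    refine norm_integral_le_of_norm_le (integrable_sqrt_gram φ hφ) ?_
    filter_upwards [φ.sphere] with x hx
    exact abs_det4_le _ _ _ _ hx
  have e : 2 * π ^ 2 * |degree φ| = ‖∫ x, detDen φ x‖ := by
    have hp : (0:ℝ) < 2 * π ^ 2 := by positivity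
    rw [degree, abs_mul, abs_of_pos (one_div_pos.2 hp), ← mul_assoc, mul_one_div_cancel hp.ne', one_mul,
      Real.norm_eq_abs]
  rw [e]
  exact h
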